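/- arXiv:1203.6383 — 5 statements merged into one kernel-verified Lean document; each statement's English description precedes it below -/
import Mathlib

section
/- Let p be an odd prime, n = 3, and P := x_1 • (y_2·y_3) − x_2 • (y_1·y_3) + x_3 • (y_1·y_2) ∈ Λ. Then for every a = (a_1,a_2,a_3) ∈ (ℤ/p)^3, φ_a(P) = P + T_a · z, where T_a := a_1 • (x_2 • y_3 − x_3 • y_2) + a_2 • (x_3 • y_1 − x_1 • y_3) + a_3 • (x_1 • y_2 − x_2 • y_1) ∈ Λ; that is, the inverse transgression of P at a equals a_1(x_2 y_3 − x_3 y_2) + a_2(x_3 y_1 − x_1 y_3) + a_3(x_1 y_2 − x_2 y_1). -/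
/-!
Algebraic model of the inverse transgression map for `G = (ℤ/p)^n`.

`R p n = 𝔽_p[x_1, …, x_n]`, `Λ p n` is the exterior algebra over `R p n` on the free
module `Fin (n+1) → R p n` with standard basis `e_0, …, e_n`; `y p n i = ι e_i`
(modelling `y_{i+1}`) and `z p n = ι e_n`.  `φ p n a` is the algebra map induced by
`e_i ↦ e_i + a_{i+1} e_n` (for `i < n`) and `e_n ↦ 0`.
-/

noncomputable section

open ExteriorAlgebra

abbrev R (p n : ℕ) : Type := MvPolynomial (Fin n) (ZMod p)

abbrev Λ (p n : ℕ) : Type := ExteriorAlgebra (R p n) (Fin (n + 1) → R p n)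

/-- The class `y_{i+1}`, i.e. `ι e_i` for `i = 0, …, n-1`. -/
def y (p n : ℕ) (i : Fin n) : Λ p n :=
  ExteriorAlgebra.ι (R p n) (Pi.single i.castSucc 1)

/-- The extra exterior generator `z = ι e_n`. -/
def z (p n : ℕ) : Λ p n :=
  ExteriorAlgebra.ι (R p n) (Pi.single (Fin.last n) 1)

/-- The linear endomorphism `e_i ↦ e_i + a_{i+1} • e_n` (`i < n`), `e_n ↦ 0`. -/
def f (p n : ℕ) (a : Fin n → ZMod p) :
    (Fin (n + 1) → R p n) →ₗ[R p n] (Fin (n + 1) → R p n) :=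
  ∑ i : Fin n,
    LinearMap.smulRight (LinearMap.proj i.castSucc)
      ((Pi.single i.castSucc 1 : Fin (n + 1) → R p n) +
        algebraMap (ZMod p) (R p n) (a i) • (Pi.single (Fin.last n) 1 : Fin (n + 1) → R p n))

/-- The algebraic inverse-transgression substitution `φ_a`. -/
def φ (p n : ℕ) (a : Fin n → ZMod p) : Λ p n →ₐ[R p n] Λ p n :=
  ExteriorAlgebra.map (f p n a)

/-- The degree-4 class `P = x_1 y_2 y_3 - x_2 y_1 y_3 + x_3 y_1 y_2` for `n = 3`. -/
def P (p : ℕ) : Λ p 3 :=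
  (MvPolynomial.X 0 : R p 3) • (y p 3 1 * y p 3 2)
    - (MvPolynomial.X 1 : R p 3) • (y p 3 0 * y p 3 2)
    + (MvPolynomial.X 2 : R p 3) • (y p 3 0 * y p 3 1)

/-- The inverse transgression
`T_a = a_1 (x_2 y_3 - x_3 y_2) + a_2 (x_3 y_1 - x_1 y_3) + a_3 (x_1 y_2 - x_2 y_1)`
of `P` at `a`. -/
def T (p : ℕ) (a : Fin 3 → ZMod p) : Λ p 3 :=
  algebraMap (ZMod p) (R p 3) (a 0) •
      ((MvPolynomial.X 1 : R p 3) • y p 3 2 - (MvPolynomial.X 2 : R p 3) • y p 3 1)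
    + algebraMap (ZMod p) (R p 3) (a 1) •
      ((MvPolynomial.X 2 : R p 3) • y p 3 0 - (MvPolynomial.X 0 : R p 3) • y p 3 2)
    + algebraMap (ZMod p) (R p 3) (a 2) •
      ((MvPolynomial.X 0 : R p 3) • y p 3 1 - (MvPolynomial.X 1 : R p 3) • y p 3 0)

section

variable {A M : Type*} [CommRing A] [AddCommGroup M] [Module A M]

theorem ι_add_smul_mul_ι_add_smul (u v w : M) (b c : A) :
    ι A (u + b • w) * ι A (v + c • w) = ι A u * ι A v + (c • ι A u - b • ι A v) * ι A w := by
  have hwv : ι A w * ι A v = -(ι A v * ι A w) :=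
    eq_neg_of_add_eq_zero_left (ι_add_mul_swap w v)
  simp only [map_add, map_smul, add_mul, mul_add, sub_mul, smul_mul_assoc, mul_smul_comm,
    ι_sq_zero, hwv]
  module

theorem map_ι_mul_ι_of_apply_eq_add_smul {g : M →ₗ[A] M} {u v w : M} {b c : A}
    (hu : g u = u + b • w) (hv : g v = v + c • w) :
    map g (ι A u * ι A v) = ι A u * ι A v + (c • ι A u - b • ι A v) * ι A w := by
  rw [map_mul, map_apply_ι, map_apply_ι, hu, hv, ι_add_smul_mul_ι_add_smul]

theorem statement1_general (g : M →ₗ[A] M) (x a : Fin 3 → A) (e : Fin 3 → M) (w : M)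
    (hg : ∀ i, g (e i) = e i + a i • w) :
    map g (x 0 • (ι A (e 1) * ι A (e 2)) - x 1 • (ι A (e 0) * ι A (e 2))
        + x 2 • (ι A (e 0) * ι A (e 1))) =
      x 0 • (ι A (e 1) * ι A (e 2)) - x 1 • (ι A (e 0) * ι A (e 2))
        + x 2 • (ι A (e 0) * ι A (e 1))
        + (a 0 • (x 1 • ι A (e 2) - x 2 • ι A (e 1)) + a 1 • (x 2 • ι A (e 0) - x 0 • ι A (e 2))
          + a 2 • (x 0 • ι A (e 1) - x 1 • ι A (e 0))) * ι A w := by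
  have map_pair (i j : Fin 3) := map_ι_mul_ι_of_apply_eq_add_smul (hg i) (hg j)
  simp only [map_add, map_sub, map_smul, map_pair, add_mul, sub_mul, smul_mul_assoc]
  module

end

theorem f_single_castSucc (p n : ℕ) (a : Fin n → ZMod p) (i : Fin n) :
    f p n a (Pi.single i.castSucc 1) =
      Pi.single i.castSucc 1 + algebraMap (ZMod p) (R p n) (a i) • Pi.single (Fin.last n) 1 := by
  simp [f, LinearMap.sum_apply, Pi.single_apply, Finset.sum_add_distrib]

/-- For `n = 3` and `P = x_1 y_2 y_3 - x_2 y_1 y_3 + x_3 y_1 y_2`, the inverse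
transgression of `P` at `a = (a_1, a_2, a_3)` is
`a_1 (x_2 y_3 - x_3 y_2) + a_2 (x_3 y_1 - x_1 y_3) + a_3 (x_1 y_2 - x_2 y_1)`,
i.e. `φ_a P = P + T_a z`. -/
theorem statement1 (p : ℕ) (hp : p.Prime) (hodd : Odd p) (a : Fin 3 → ZMod p) :
    φ p 3 a (P p) = P p + T p a * z p 3 :=
  statement1_general (f p 3 a) MvPolynomial.X (fun i ↦ algebraMap (ZMod p) (R p 3) (a i))
    (fun i ↦ Pi.single i.castSucc 1) (Pi.single (Fin.last 3) 1) (f_single_castSucc p 3 a)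

end
end

section
/- The function ω : G × G × G → ℂˣ defined by ω((ρ₁,x₁),(ρ₂,x₂),(ρ₃,x₃)) := ρ₁(k(x₂,x₃)) satisfies the 3-cocycle identity: for all a, b, c, d ∈ G, ω(b,c,d) · ω(a,bc,d) · ω(a,b,c) = ω(ab,c,d) · ω(a,b,cd). In particular ω is a 3-cocycle on the group G = K̂ × (H/K) with values in ℂˣ. -/
/-!
Comparing the two bracketings of `u x * u y * u z` shows that `k` is a 2-cocycle; centrality of `K`
is what lets `k y z` move past `u x`. The function `ω` is the cup product of the tautological
1-cocycle `(ρ, x) ↦ ρ` with the inflation of `k`. In the 3-cocycle identity the factor `ω(b,c,d)`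
cancels against `ω(ab,c,d) = ω(a,c,d) ω(b,c,d)`, and what remains is the image under the character
component of `a` of the 2-cocycle identity for `k`.
-/

/-- Multiplicative 2-cocycles for the trivial action. The order of the factors is the one that
factor sets satisfy; it is fixed because a central subgroup carries no commutativity instance. -/
def IsMulTwoCocycle {Q M : Type*} [Mul Q] [Mul M] (k : Q → Q → M) : Prop :=
  ∀ x y z, k x y * k (x * y) z = k y z * k x (y * z)

/-- Multiplicative 3-cocycles for the trivial action, with inverses cleared from the identity. -/
def IsMulThreeCocycle {G A : Type*} [Mul G] [Mul A] (ω : G → G → G → A) : Prop :=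
  ∀ a b c d, ω b c d * ω a (b * c) d * ω a b c = ω (a * b) c d * ω a b (c * d)

/-- The cup product, under the evaluation pairing `(M →* A) × M → A`, of the projection
`(M →* A) × Q → (M →* A)` with a 2-cochain `k` on `Q`. For `A = ℂˣ` it is the `ω` of the paper. -/
def evalCup {Q M A : Type*} [MulOneClass M] [MulOneClass A] (k : Q → Q → M)
    (g₁ g₂ g₃ : (M →* A) × Q) : A :=
  g₁.1 (k g₂.2 g₃.2)

theorem IsMulTwoCocycle.isMulThreeCocycle_evalCup {Q M A : Type*} [Mul Q] [MulOneClass M]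
    [CommMonoid A] {k : Q → Q → M} (hk : IsMulTwoCocycle k) :
    IsMulThreeCocycle (evalCup (A := A) k) := by
  rintro ⟨ρ, _⟩ ⟨σ, x⟩ ⟨_, y⟩ ⟨_, z⟩
  change σ (k y z) * ρ (k (x * y) z) * ρ (k x y) = ρ (k y z) * σ (k y z) * ρ (k x (y * z))
  calc
    σ (k y z) * ρ (k (x * y) z) * ρ (k x y) = σ (k y z) * ρ (k x y * k (x * y) z) := by
      rw [map_mul, mul_assoc, mul_comm (ρ (k x y))]
    _ = σ (k y z) * ρ (k y z * k x (y * z)) := by rw [hk]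
    _ = ρ (k y z) * σ (k y z) * ρ (k x (y * z)) := by
      rw [map_mul, ← mul_assoc, mul_comm (σ (k y z))]

section FactorSet

variable {H Q : Type*} [Group H] [Semigroup Q] {K : Subgroup H} {u : Q → H} {k : Q → Q → K}

theorem isMulTwoCocycle_of_le_center (hK : K ≤ Subgroup.center H)
    (hk : ∀ x y, (k x y : H) = u x * u y * (u (x * y))⁻¹) : IsMulTwoCocycle k := by
  intro x y z
  have k_mul_u (x y : Q) : (k x y : H) * u (x * y) = u x * u y := by
    rw [hk, inv_mul_cancel_right]
  have k_comm : u x * k y z = k y z * u x := Subgroup.mem_center_iff.mp (hK (k y z).2) (u x)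
  apply Subtype.ext
  apply mul_right_cancel (b := u (x * y * z))
  calc
    (k x y * k (x * y) z : H) * u (x * y * z) = u x * (u y * u z) := by
      rw [mul_assoc, k_mul_u, ← mul_assoc, k_mul_u, mul_assoc]
    _ = k y z * (u x * u (y * z)) := by rw [← k_mul_u y z, ← mul_assoc, k_comm, mul_assoc]
    _ = (k y z * k x (y * z) : H) * u (x * y * z) := by
      rw [← k_mul_u x (y * z), ← mul_assoc, mul_assoc x y z]

theorem statement5_general {A : Type*} [CommMonoid A] (hK : K ≤ Subgroup.center H)
    (hk : ∀ x y, (k x y : H) = u x * u y * (u (x * y))⁻¹) :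
    IsMulThreeCocycle (evalCup (A := A) k) :=
  (isMulTwoCocycle_of_le_center hK hk).isMulThreeCocycle_evalCup

end FactorSet

/-- Let `H` be a finite group, `K ≤ Z(H)` a central (hence normal) subgroup,
`u : H ⧸ K → H` a set-theoretic section of the projection, and
`k(x, y) = u x · u y · u (x y)⁻¹ ∈ K`.  On the direct product group
`G = K̂ × (H ⧸ K)` (where `K̂ = K →* ℂˣ` is the character group of `K`), the function
`ω((ρ₁, x₁), (ρ₂, x₂), (ρ₃, x₃)) = ρ₁ (k (x₂, x₃))` satisfies the 3-cocycle identity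
`ω(b,c,d) ω(a,bc,d) ω(a,b,c) = ω(ab,c,d) ω(a,b,cd)`; in particular `ω` is a
3-cocycle on `G` with values in `ℂˣ`. -/
theorem statement5 {H : Type} [Group H] [Finite H] (K : Subgroup H) [K.Normal]
    (hK : K ≤ Subgroup.center H)
    (u : H ⧸ K → H) (hu : ∀ x : H ⧸ K, (QuotientGroup.mk (u x) : H ⧸ K) = x)
    (kf : H ⧸ K → H ⧸ K → K)
    (hkf : ∀ x y : H ⧸ K, (kf x y : H) = u x * u y * (u (x * y))⁻¹)
    (ω : (K →* ℂˣ) × (H ⧸ K) → (K →* ℂˣ) × (H ⧸ K) → (K →* ℂˣ) × (H ⧸ K) → ℂˣ)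
    (hω : ∀ g₁ g₂ g₃ : (K →* ℂˣ) × (H ⧸ K), ω g₁ g₂ g₃ = g₁.1 (kf g₂.2 g₃.2)) :
    ∀ a b c d : (K →* ℂˣ) × (H ⧸ K),
      ω b c d * ω a (b * c) d * ω a b c = ω (a * b) c d * ω a b (c * d) := by
  obtain rfl : ω = evalCup kf := by funext g₁ g₂ g₃; exact hω g₁ g₂ g₃
  exact statement5_general hK hkf
end

section
/- Assume in addition that p is an odd prime, n ≥ 1, H has order p^{2n+1} and exponent p (h^p = 1 for all h ∈ H), K = Z(H) is the center of H and has order p, and every commutator ⁅a,b⁆ (a,b ∈ H) lies in Z(H) (so H is an extra-special p-group of exponent p and H/K is elementary abelian). Then the 3-cocycle ω on G = K̂ × (H/K) defined by ω((ρ₁,x₁),(ρ₂,x₂),(ρ₃,x₃)) := ρ₁(k(x₂,x₃)) is not a coboundary: there is no function β : G × G → ℂˣ such that ω(a,b,c) = β(b,c) · β(a,bc) · β(ab,c)⁻¹ · β(a,b)⁻¹ for all a, b, c ∈ G. In particular ω represents a nontrivial class in H³(G; ℂˣ). -/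
open scoped commutatorElement

/-!
The product of a 3-cochain over the even permutations of `(a, b, c)`, divided by the product over
the odd permutations, is trivial for a coboundary as soon as `a`, `b`, `c` commute pairwise.
For `ω` at `(ρ, 1), (1, x), (1, y)` with `x`, `y` commuting in `H ⧸ K`, this alternating product is
`ρ (k x y) / ρ (k y x) = ρ ⁅u x, u y⁆`, and since `K` is central `⁅u x, u y⁆ = ⁅a, b⁆` for any lifts
`a`, `b` of `x`, `y`. A nontrivial commutator in `K` is detected by some character `ρ`, so it
obstructs `ω` from being a coboundary.
-/

section Coboundary

variable {G M : Type*} [Mul G] [CommGroup M]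

/-- Coboundaries in degree 3 of inhomogeneous cochains on `G`, with values in the multiplicative
group `M` on which `G` acts trivially. -/
def IsMulCoboundary₃ (ω : G → G → G → M) : Prop :=
  ∃ β : G → G → M, ∀ a b c : G,
    ω a b c = β b c * β a (b * c) * (β (a * b) c)⁻¹ * (β a b)⁻¹

theorem IsMulCoboundary₃.prod_even_perm_eq_prod_odd_perm {ω : G → G → G → M}
    (hω : IsMulCoboundary₃ ω) {a b c : G}
    (hab : Commute a b) (hac : Commute a c) (hbc : Commute b c) :
    ω a b c * ω b c a * ω c a b = ω a c b * ω c b a * ω b a c := by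
  obtain ⟨β, hβ⟩ := hω
  simp only [hβ, ← hab.eq, ← hac.eq, ← hbc.eq]
  apply Additive.ofMul.injective
  simp only [ofMul_mul, ofMul_inv]
  abel

end Coboundary

section CharacterCochain

/-- The 3-cochain `((ρ₁, x₁), (ρ₂, x₂), (ρ₃, x₃)) ↦ ρ₁ (k x₂ x₃)` on `(A →* M) × X` attached to an
`A`-valued 2-cochain `k` on `X`; it is the `ω` of the theorem for `M = ℂˣ`. -/
def characterCochain {X A : Type*} [MulOneClass A] (M : Type*) [CommGroup M] (k : X → X → A)
    (g₁ g₂ g₃ : (A →* M) × X) : M :=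
  g₁.1 (k g₂.2 g₃.2)

variable {X A M : Type*} [MulOneClass X] [MulOneClass A] [CommGroup M]

theorem map_eq_map_swap_of_isMulCoboundary₃_characterCochain {k : X → X → A}
    (hk : IsMulCoboundary₃ (characterCochain M k)) (ρ : A →* M) {x y : X} (hxy : Commute x y) :
    ρ (k x y) = ρ (k y x) := by
  have hρx : Commute ((ρ, 1) : (A →* M) × X) (1, x) := .prod (.one_right ρ) (.one_left x)
  have hρy : Commute ((ρ, 1) : (A →* M) × X) (1, y) := .prod (.one_right ρ) (.one_left y)
  have hxy' : Commute ((1, x) : (A →* M) × X) (1, y) := .prod (.one_left 1) hxy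
  simpa [characterCochain] using hk.prod_even_perm_eq_prod_odd_perm hρx hρy hxy'

end CharacterCochain

section Characters

/-- The inclusion `ℚ/ℤ → ℝ/ℤ`, which turns the `ℚ/ℤ`-valued characters of `CharacterModule` into
complex ones. -/
noncomputable def ratAddCircleToReal : AddCircle (1 : ℚ) →+ AddCircle (1 : ℝ) :=
  QuotientAddGroup.map _ _ (Rat.castHom ℝ).toAddMonoidHom <| by
    rw [AddSubgroup.zmultiples_le]
    exact ⟨1, by simp⟩

theorem ratAddCircleToReal_injective : Function.Injective ratAddCircleToReal := by
  rw [injective_iff_map_eq_zero]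
  intro t ht
  obtain ⟨q, rfl⟩ := QuotientAddGroup.mk_surjective t
  obtain ⟨n, hn⟩ := AddSubgroup.mem_zmultiples_iff.mp <|
    (QuotientAddGroup.eq_zero_iff (q : ℝ)).mp ht
  rw [zsmul_one] at hn
  have hnq : (n : ℚ) = q := mod_cast hn
  exact (QuotientAddGroup.eq_zero_iff q).mpr ⟨n, by simpa using hnq⟩

theorem exists_monoidHom_complex_units_apply_ne_one {A : Type*} [CommGroup A] {a : A}
    (ha : a ≠ 1) : ∃ ρ : A →* ℂˣ, ρ a ≠ 1 := by
  obtain ⟨χ, hχ⟩ := CharacterModule.exists_character_apply_ne_zero_of_ne_zero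
    (a := Additive.ofMul a) ha
  let ρ : A →* ℂˣ := Circle.toUnits.comp <| AddCircle.toCircle_addChar.toMonoidHom.comp <|
    AddMonoidHom.toMultiplicativeRight (ratAddCircleToReal.comp χ)
  have hρ : Function.Injective fun t : AddCircle (1 : ℚ) ↦
      Circle.toUnits (ratAddCircleToReal t).toCircle :=
    unitSphereToUnits_injective.comp <|
      (AddCircle.injective_toCircle one_ne_zero).comp ratAddCircleToReal_injective
  refine ⟨ρ, fun h ↦ hχ (hρ ?_)⟩
  simpa [ρ] using! h

end Characters

section CentralExtension

variable {H : Type*} [Group H]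

theorem exists_commutatorElement_ne_one_of_center_ne_top (h : Subgroup.center H ≠ ⊤) :
    ∃ a b : H, ⁅a, b⁆ ≠ 1 := by
  contrapose! h
  exact (Subgroup.eq_top_iff' _).mpr fun a ↦ Subgroup.mem_center_iff.mpr fun b ↦
    commutatorElement_eq_one_iff_mul_comm.mp (h b a)

variable {K : Subgroup H}

theorem commutatorElement_eq_of_mk_eq_mk (hK : K ≤ Subgroup.center H) {a a' b b' : H}
    (ha : (a : H ⧸ K) = a') (hb : (b : H ⧸ K) = b') : ⁅a, b⁆ = ⁅a', b'⁆ := by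
  obtain ⟨z, hz, rfl⟩ : ∃ z ∈ K, a * z = a' := ⟨a⁻¹ * a', QuotientGroup.eq.mp ha, by group⟩
  obtain ⟨w, hw, rfl⟩ : ∃ w ∈ K, b * w = b' := ⟨b⁻¹ * b', QuotientGroup.eq.mp hb, by group⟩
  have hz_comm (g : H) : ⁅z, g⁆ = 1 :=
    commutatorElement_eq_one_iff_mul_comm.mpr (Subgroup.mem_center_iff.mp (hK hz) g).symm
  have hw_comm (g : H) : ⁅g, w⁆ = 1 :=
    commutatorElement_eq_one_iff_mul_comm.mpr (Subgroup.mem_center_iff.mp (hK hw) g)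
  simp [commutatorElement_mul_left_eq_conj_mul, commutatorElement_mul_right_eq_mul_conj,
    hz_comm, hw_comm]

theorem commute_mk_mk_of_commutatorElement_mem [K.Normal] {a b : H} (hab : ⁅a, b⁆ ∈ K) :
    Commute (a : H ⧸ K) (b : H ⧸ K) := by
  rw [← commutatorElement_eq_one_iff_commute]
  exact (map_commutatorElement (QuotientGroup.mk' K) a b).symm.trans
    ((QuotientGroup.eq_one_iff _).mpr hab)

theorem coe_mul_inv_swap_eq_commutatorElement {Q : Type*} [Mul Q] {u : Q → H} {k : Q → Q → K}
    (hk : ∀ x y, (k x y : H) = u x * u y * (u (x * y))⁻¹) {x y : Q} (hxy : Commute x y) :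
    ((k x y * (k y x)⁻¹ : K) : H) = ⁅u x, u y⁆ := by
  rw [Subgroup.coe_mul, Subgroup.coe_inv, hk, hk, hxy.eq, commutatorElement_def]
  group

theorem exists_monoidHom_apply_ne_of_le_center (hK : K ≤ Subgroup.center H) {k l : K}
    (hkl : k ≠ l) : ∃ ρ : K →* ℂˣ, ρ k ≠ ρ l := by
  let _ : CommGroup K :=
    { mul_comm := fun k l ↦ Subtype.ext (Subgroup.mem_center_iff.mp (hK l.2) k) }
  obtain ⟨ρ, hρ⟩ := exists_monoidHom_complex_units_apply_ne_one (div_ne_one.mpr hkl)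
  exact ⟨ρ, fun h ↦ hρ (by rw [map_div, h, div_self'])⟩

end CentralExtension

theorem statement6_general {H : Type*} [Group H] {K : Subgroup H} [K.Normal]
    (hK : K ≤ Subgroup.center H) {a b : H} (hab : ⁅a, b⁆ ∈ K) (hab_ne : ⁅a, b⁆ ≠ 1)
    {u : H ⧸ K → H} (hu : ∀ x : H ⧸ K, (u x : H ⧸ K) = x) {k : H ⧸ K → H ⧸ K → K}
    (hk : ∀ x y, (k x y : H) = u x * u y * (u (x * y))⁻¹) :
    ¬ IsMulCoboundary₃ (characterCochain ℂˣ k) := by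
  intro hω
  have hcomm : Commute (a : H ⧸ K) (b : H ⧸ K) := commute_mk_mk_of_commutatorElement_mem hab
  have hk_ne : k a b ≠ k b a := by
    intro h
    apply hab_ne
    calc ⁅a, b⁆ = ⁅u a, u b⁆ := commutatorElement_eq_of_mk_eq_mk hK (hu a).symm (hu b).symm
      _ = ((k a b * (k b a)⁻¹ : K) : H) := (coe_mul_inv_swap_eq_commutatorElement hk hcomm).symm
      _ = 1 := by rw [h, mul_inv_cancel, Subgroup.coe_one]
  obtain ⟨ρ, hρ⟩ := exists_monoidHom_apply_ne_of_le_center hK hk_ne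
  exact hρ (map_eq_map_swap_of_isMulCoboundary₃_characterCochain hω ρ hcomm)

/-- Let `p` be an odd prime and `H` an extra-special group of order `p^(2n+1)` and
exponent `p`: the center `K = Z(H)` has order `p`, every commutator lies in `Z(H)`,
and `h ^ p = 1` for all `h`.  Let `u : H ⧸ K → H` be a section of the projection with
associated 2-cocycle `k(x, y) = u x · u y · u (x y)⁻¹ ∈ K`, and let
`ω((ρ₁,x₁),(ρ₂,x₂),(ρ₃,x₃)) = ρ₁ (k (x₂, x₃))` be the resulting 3-cocycle on the
group `G = K̂ × (H ⧸ K)`.  Then `ω` is not a coboundary: there is no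
`β : G × G → ℂˣ` with `ω(a,b,c) = β(b,c) β(a,bc) β(ab,c)⁻¹ β(a,b)⁻¹` for all
`a, b, c ∈ G`.  In particular `ω` represents a nontrivial class in `H³(G; ℂˣ)`. -/
theorem statement6 (p n : ℕ) (hp : p.Prime) (hodd : Odd p) (hn : 1 ≤ n)
    {H : Type} [Group H] [Finite H]
    (hcard : Nat.card H = p ^ (2 * n + 1))
    (hexp : ∀ h : H, h ^ p = 1)
    (hcenter : Nat.card (Subgroup.center H) = p)
    (hcomm : ∀ a b : H, ⁅a, b⁆ ∈ Subgroup.center H)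
    (u : H ⧸ Subgroup.center H → H)
    (hu : ∀ x : H ⧸ Subgroup.center H,
      (QuotientGroup.mk (u x) : H ⧸ Subgroup.center H) = x)
    (kf : H ⧸ Subgroup.center H → H ⧸ Subgroup.center H → Subgroup.center H)
    (hkf : ∀ x y : H ⧸ Subgroup.center H, (kf x y : H) = u x * u y * (u (x * y))⁻¹)
    (ω : (Subgroup.center H →* ℂˣ) × (H ⧸ Subgroup.center H) →
      (Subgroup.center H →* ℂˣ) × (H ⧸ Subgroup.center H) →
      (Subgroup.center H →* ℂˣ) × (H ⧸ Subgroup.center H) → ℂˣ)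
    (hω : ∀ g₁ g₂ g₃ : (Subgroup.center H →* ℂˣ) × (H ⧸ Subgroup.center H),
      ω g₁ g₂ g₃ = g₁.1 (kf g₂.2 g₃.2)) :
    ¬ ∃ β : (Subgroup.center H →* ℂˣ) × (H ⧸ Subgroup.center H) →
        (Subgroup.center H →* ℂˣ) × (H ⧸ Subgroup.center H) → ℂˣ,
      ∀ a b c : (Subgroup.center H →* ℂˣ) × (H ⧸ Subgroup.center H),
        ω a b c = β b c * β a (b * c) * (β (a * b) c)⁻¹ * (β a b)⁻¹ := by
  have hcenter_ne_top : Subgroup.center H ≠ ⊤ := by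
    rw [Ne, ← Subgroup.card_eq_iff_eq_top, hcenter, hcard]
    exact (lt_self_pow₀ hp.one_lt (by lia)).ne
  obtain ⟨a, b, hab⟩ := exists_commutatorElement_ne_one_of_center_ne_top hcenter_ne_top
  obtain rfl : ω = characterCochain ℂˣ kf := by
    funext g₁ g₂ g₃
    exact hω g₁ g₂ g₃
  exact statement6_general le_rfl (hcomm a b) hab hu hkf
end

section
/- Let p be a prime and H a finite group such that the center Z(H) has order exactly p, every commutator ⁅a,b⁆ (a,b ∈ H) lies in Z(H), and h^p ∈ Z(H) for every h ∈ H (so that H/Z(H) is elementary abelian). Then there exists n ∈ ℕ such that the order of H equals p^{2n+1}; that is, any extra-special p-group has order p^{2n+1} for some n. -/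
open scoped commutatorElement

/-!
Let `A` be a subgroup of `G` equal to its own centralizer. If commutators are central, then
`(g, a) ↦ ⁅g, a⁆` is multiplicative in each variable on `G × A`, with left kernel `A` and right
kernel `Z(G)`. If moreover the commutators lie in a cyclic group, character duality for finite
abelian groups shows that the two kernels have the same index, so `[G : A] = [A : Z(G)]` and
`[G : Z(G)] = [G : A] ^ 2`. When `G ⧸ Z(G)` is a finite `p`-group, `[G : A]` is a power of `p`.
-/

section Duality

theorem exists_complexUnits_orderOf_eq (n : ℕ) : ∃ ζ : ℂˣ, orderOf ζ = n := by
  obtain rfl | hn := eq_or_ne n 0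
  · refine ⟨Units.mk0 2 two_ne_zero, orderOf_eq_zero_iff'.mpr fun m hm h ↦ ?_⟩
    have two_pow_eq_one : (2 : ℂ) ^ m = 1 := congrArg Units.val h
    exact (Nat.one_lt_two_pow hm.ne').ne' (mod_cast two_pow_eq_one)
  · have : NeZero n := ⟨hn⟩
    obtain ⟨ζ, hζ⟩ := HasEnoughRootsOfUnity.exists_primitiveRoot ℂ n
    exact ⟨(hζ.isUnit hn).unit, by rw [← orderOf_units, IsUnit.unit_spec, hζ.eq_orderOf]⟩

theorem exists_injective_monoidHom_complexUnits (C : Type*) [Group C] [IsCyclic C] :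
    ∃ f : C →* ℂˣ, Function.Injective f := by
  obtain ⟨ζ, hζ⟩ := exists_complexUnits_orderOf_eq (Nat.card C)
  let e : C ≃* Subgroup.zpowers ζ :=
    mulEquivOfCyclicCardEq (by rw [Nat.card_zpowers, hζ])
  exact ⟨(Subgroup.zpowers ζ).subtype.comp e, Subtype.val_injective.comp e.injective⟩

theorem card_monoidHom_dvd_card (B C : Type*) [CommGroup B] [CommGroup C] [IsCyclic C] :
    Nat.card (B →* C) ∣ Nat.card B := by
  obtain _ | _ := finite_or_infinite B
  · obtain ⟨f, hf⟩ := exists_injective_monoidHom_complexUnits C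
    rw [← CommGroup.card_monoidHom_of_hasEnoughRootsOfUnity B ℂ]
    exact Subgroup.card_dvd_of_injective (MonoidHom.compHom f)
      fun _ _ h ↦ (MonoidHom.cancel_left hf).mp h
  · rw [Nat.card_eq_zero_of_infinite (α := B)]
    exact dvd_zero _

variable {A B C : Type*} [Group A] [Group B] [CommGroup C] [IsCyclic C]

-- Divisibility, unlike `≤`, remains correct for infinite indices, which are `0` in Mathlib.
theorem index_ker_dvd_index_ker_flip (φ : A →* B →* C) :
    φ.ker.index ∣ φ.flip.ker.index := by
  -- Duality needs a commutative group, so `B` is replaced by its image in `A →* C`.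
  let ev : A →* φ.flip.range →* C := MonoidHom.eval.compl₂ φ.flip.range.subtype
  have ker_ev : ev.ker = φ.ker := by
    ext a
    refine ⟨fun ha ↦ MonoidHom.ext fun b ↦ DFunLike.congr_fun ha ⟨φ.flip b, b, rfl⟩,
      fun ha ↦ MonoidHom.ext ?_⟩
    rintro ⟨_, b, rfl⟩
    exact DFunLike.congr_fun ha b
  calc φ.ker.index = Nat.card ev.range := by rw [← ker_ev, Subgroup.index_ker]
    _ ∣ Nat.card (φ.flip.range →* C) := Subgroup.card_subgroup_dvd_card _
    _ ∣ Nat.card φ.flip.range := card_monoidHom_dvd_card _ _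
    _ = φ.flip.ker.index := (Subgroup.index_ker _).symm

theorem index_ker_eq_index_ker_flip (φ : A →* B →* C) :
    φ.ker.index = φ.flip.ker.index :=
  Nat.dvd_antisymm (index_ker_dvd_index_ker_flip φ) (index_ker_dvd_index_ker_flip φ.flip)

end Duality

section CommutatorPairing

open Subgroup
open scoped IsMulCommutative

theorem exists_centralizer_eq_self (G : Type*) [Group G] :
    ∃ A : Subgroup G, centralizer (A : Set G) = A := by
  obtain ⟨S, hS⟩ : ∃ S : Set G, Maximal (· ∈ {S : Set G | S ⊆ S.centralizer}) S := by
    refine zorn_subset _ fun c hc hchain ↦ ⟨⋃₀ c, ?_, fun _ ↦ Set.subset_sUnion_of_mem⟩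
    rintro x ⟨s, hs, hxs⟩ y ⟨t, ht, hyt⟩
    obtain hst | hts := hchain.total hs ht
    · exact hc ht (hst hxs) y hyt
    · exact hc hs hxs y (hts hyt)
  have centralizer_subset : S.centralizer ⊆ S := by
    intro g hg
    refine hS.2 (y := insert g S) ?_ (Set.subset_insert g S) (Set.mem_insert g S)
    rintro x (rfl | hx) y (rfl | hy)
    · rfl
    · exact hg y hy
    · exact (hg x hx).symm
    · exact hS.1 hx y hy
  have centralizer_eq : (centralizer S : Set G) = S :=
    centralizer_subset.antisymm hS.1
  exact ⟨centralizer S, congrArg centralizer centralizer_eq⟩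

variable {G : Type*} [Group G]

theorem commutatorElement_mul_left_of_le_center (hG : commutator G ≤ center G) (a b c : G) :
    ⁅a * b, c⁆ = ⁅a, c⁆ * ⁅b, c⁆ := by
  have bc_central : ⁅b, c⁆ ∈ center G :=
    hG (commutator_mem_commutator (mem_top b) (mem_top c))
  rw [commutatorElement_mul_left_eq_conj_mul, mem_center_iff.mp bc_central,
    mul_inv_cancel_right, mem_center_iff.mp bc_central]

theorem commutatorElement_mul_right_of_le_center (hG : commutator G ≤ center G) (a b c : G) :
    ⁅a, b * c⁆ = ⁅a, b⁆ * ⁅a, c⁆ := by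
  have ac_central : ⁅a, c⁆ ∈ center G :=
    hG (commutator_mem_commutator (mem_top a) (mem_top c))
  rw [commutatorElement_mul_right_eq_mul_conj, mul_assoc ⁅a, b⁆, mem_center_iff.mp ac_central,
    mul_assoc, mul_inv_cancel_right]

/-- The commutator map `(a, b) ↦ ⁅a, b⁆` of a group of nilpotency class at most two, as a pairing
of the group with itself, multiplicative in each variable. -/
def commutatorPairing [IsMulCommutative (commutator G)] (hG : commutator G ≤ center G) :
    G →* G →* commutator G :=
  MonoidHom.mk'
    (fun a ↦ MonoidHom.mk'
      (fun b ↦ ⟨⁅a, b⁆, commutator_mem_commutator (mem_top a) (mem_top b)⟩)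
      fun b c ↦ Subtype.ext (commutatorElement_mul_right_of_le_center hG a b c))
    fun a b ↦ MonoidHom.ext fun c ↦
      Subtype.ext (commutatorElement_mul_left_of_le_center hG a b c)

theorem commutatorPairing_apply_eq_one_iff [IsMulCommutative (commutator G)]
    (hG : commutator G ≤ center G) {a b : G} :
    commutatorPairing hG a b = 1 ↔ Commute a b :=
  Subtype.ext_iff.trans commutatorElement_eq_one_iff_commute

variable [IsCyclic (commutator G)]

theorem index_centralizer_eq_relIndex_center (hG : commutator G ≤ center G) (A : Subgroup G) :
    (centralizer (A : Set G)).index = (center G).relIndex A := by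
  let φ : G →* A →* commutator G := (commutatorPairing hG).compl₂ A.subtype
  have ker_φ : φ.ker = centralizer (A : Set G) := by
    ext g
    simp [φ, MonoidHom.mem_ker, DFunLike.ext_iff, commutatorPairing_apply_eq_one_iff,
      mem_centralizer_iff, Commute.symm_iff (a := g), commute_iff_eq]
  have ker_flip_φ : φ.flip.ker = (center G).subgroupOf A := by
    ext a
    simp [φ, MonoidHom.mem_ker, DFunLike.ext_iff, commutatorPairing_apply_eq_one_iff,
      mem_subgroupOf, mem_center_iff, commute_iff_eq]
  rw [← ker_φ, index_ker_eq_index_ker_flip, ker_flip_φ, relIndex]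

theorem isSquare_index_center_of_commutator_le_center (hG : commutator G ≤ center G) :
    IsSquare (center G).index := by
  obtain ⟨A, hA⟩ := exists_centralizer_eq_self G
  have center_le : center G ≤ A := hA ▸ center_le_centralizer (A : Set G)
  refine ⟨A.index, ?_⟩
  rw [← relIndex_mul_index center_le, ← index_centralizer_eq_relIndex_center hG, hA]

end CommutatorPairing

theorem statement8_general {p : ℕ} (hp : p.Prime) {G : Type*} [Group G]
    [IsCyclic (commutator G)] [(Subgroup.center G).FiniteIndex]
    (hcomm : commutator G ≤ Subgroup.center G)
    (hpow : ∀ g : G, g ^ p ∈ Subgroup.center G) :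
    ∃ n : ℕ, (Subgroup.center G).index = p ^ (2 * n) := by
  have : Fact p.Prime := ⟨hp⟩
  have isPGroup_quotient : IsPGroup p (G ⧸ Subgroup.center G) := fun x ↦ by
    induction x using QuotientGroup.induction_on with
    | H g => exact ⟨1, by simpa [← QuotientGroup.mk_pow] using hpow g⟩
  obtain ⟨k, hk⟩ : ∃ k, (Subgroup.center G).index = p ^ k := isPGroup_quotient.exists_card_eq
  obtain ⟨m, hm⟩ := isSquare_index_center_of_commutator_le_center hcomm
  obtain ⟨n, -, rfl⟩ := (Nat.dvd_prime_pow hp).mp (hk ▸ hm ▸ dvd_mul_right m m)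
  exact ⟨n, by rw [hm, two_mul, pow_add]⟩

/-- Any extra-special `p`-group has order `p^(2n+1)` for some `n`: if `H` is a finite
group whose center has order exactly `p`, in which every commutator is central and
`h ^ p` is central for every `h` (so `H ⧸ Z(H)` is elementary abelian), then
`|H| = p^(2n+1)` for some `n ∈ ℕ`. -/
theorem statement8 (p : ℕ) (hp : p.Prime) {H : Type} [Group H] [Finite H]
    (hcenter : Nat.card (Subgroup.center H) = p)
    (hcomm : ∀ a b : H, ⁅a, b⁆ ∈ Subgroup.center H)
    (hpow : ∀ h : H, h ^ p ∈ Subgroup.center H) :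
    ∃ n : ℕ, Nat.card H = p ^ (2 * n + 1) := by
  have : Fact p.Prime := ⟨hp⟩
  have commutator_le : commutator H ≤ Subgroup.center H :=
    Subgroup.commutator_le.mpr fun a _ b _ ↦ hcomm a b
  have : IsCyclic (Subgroup.center H) := isCyclic_of_prime_card hcenter
  have : IsCyclic (commutator H) := Subgroup.isCyclic_of_le commutator_le
  obtain ⟨n, hn⟩ := statement8_general hp commutator_le hpow
  exact ⟨n, by rw [← (Subgroup.center H).index_mul_card, hn, hcenter, pow_succ]⟩
end

section
/- Let p be a prime, n ≥ 1, and let G be the elementary abelian group (ℤ/p)^n (written multiplicatively, e.g. G = Multiplicative (Fin n → ZMod p)). Then for every degree k ≥ 1, the group cohomology H^k(G; ℤ) with trivial G-action on ℤ is annihilated by p: for every x ∈ groupCohomology (Rep.trivial ℤ G ℤ) k one has p • x = 0. In particular the map on H^k(G; ℤ) induced by multiplication by p on the coefficients ℤ is the zero map in all positive degrees. -/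
/-!
An `Ext` class over `G` that restricts to zero on a subgroup `S` of finite index is killed by
`S.index`: dimension shifting reduces this to degree one, where one sums the conjugates of an
`S`-equivariant map over `G ⧸ S`. Now let `G` be a product of finite groups and let `S` be the
kernel of the `a`-th coordinate, whose index is the order of the `a`-th factor. The endomorphism of
`G` replacing the `a`-th coordinate by `1` is the identity on `S`, so a class and its pullback along
this endomorphism have the same multiple by `S.index`. Replacing the coordinates by `1` one at a
time, a common multiple of the orders of the factors times a class equals the same multiple of its
pullback along the trivial homomorphism, which factors through the trivial group and so vanishes in
positive degree.
-/

open CategoryTheory Abelian Limits Rep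

universe u v w u' v' w' u'' v'' w''

section DimensionShifting

variable {C : Type u} [Category.{v} C] [Abelian C] [HasExt.{w} C]

theorem ext_induction_of_enoughProjectives [EnoughProjectives C] {Y : C}
    {motive : ∀ {X : C} {n : ℕ}, Ext X Y n → Prop}
    (mk₀ : ∀ {X : C} (f : X ⟶ Y), motive (Ext.mk₀ f))
    (extClass_comp : ∀ {T : ShortComplex C} (hT : T.ShortExact) [Projective T.X₂] {n : ℕ}
      (x : Ext T.X₁ Y n), motive x → motive (hT.extClass.comp x (add_comm 1 n)))
    {X : C} {n : ℕ} (x : Ext X Y n) : motive x := by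
  induction n generalizing X with
  | zero =>
    obtain ⟨f, rfl⟩ := (Ext.mk₀_bijective X Y).2 x
    exact mk₀ f
  | succ n ih =>
    let T := ShortComplex.mk _ _ (kernel.condition (Projective.π X))
    have hT : T.ShortExact := { exact := ShortComplex.exact_kernel (Projective.π X) }
    obtain ⟨y, rfl⟩ := Ext.contravariant_sequence_exact₃ hT Y x
      (Ext.eq_zero_of_projective _) (add_comm 1 n)
    exact extClass_comp hT y (ih y)

theorem mapExactFunctor_id [EnoughProjectives C] {X Y : C} {n : ℕ} (x : Ext X Y n) :
    x.mapExactFunctor (𝟭 C) = x := by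
  induction x using ext_induction_of_enoughProjectives with
  | mk₀ f => exact Ext.mapExactFunctor_mk₀ _ f
  | extClass_comp hT x ih =>
    rw [Ext.mapExactFunctor_comp, Ext.mapExactFunctor_extClass]
    exact congrArg (hT.extClass.comp · _) ih

theorem mapExactFunctor_comp_functor [EnoughProjectives C]
    {D : Type u'} [Category.{v'} D] [Abelian D] [HasExt.{w'} D]
    {E : Type u''} [Category.{v''} E] [Abelian E] [HasExt.{w''} E]
    (F : C ⥤ D) [F.Additive] [PreservesFiniteLimits F] [PreservesFiniteColimits F]
    (G : D ⥤ E) [G.Additive] [PreservesFiniteLimits G] [PreservesFiniteColimits G]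
    {X Y : C} {n : ℕ} (x : Ext X Y n) :
    x.mapExactFunctor (F ⋙ G) = (x.mapExactFunctor F).mapExactFunctor G := by
  induction x using ext_induction_of_enoughProjectives with
  | mk₀ f => simp only [Ext.mapExactFunctor_mk₀, Functor.comp_map, Functor.comp_obj]
  | extClass_comp hT x ih =>
    have hext : hT.extClass.mapExactFunctor (F ⋙ G) =
        (hT.extClass.mapExactFunctor F).mapExactFunctor G := by
      rw [Ext.mapExactFunctor_extClass (F := F)]
      exact (Ext.mapExactFunctor_extClass _ hT).trans
        (Ext.mapExactFunctor_extClass G (hT.map_of_exact F)).symm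
    rw [Ext.mapExactFunctor_comp, Ext.mapExactFunctor_comp, hext, ih]
    exact (Ext.mapExactFunctor_comp G _ _ _).symm

end DimensionShifting

section Transfer

variable {k : Type u} {G : Type v} [CommRing k] [Group G] {S : Subgroup G} {X X' Y : Rep.{w} k G}

/-- The conjugate `g ∘ z ∘ g⁻¹` of an `S`-equivariant map `z` between representations of `G`; by
equivariance it depends only on the coset `g S`. -/
def cosetConj (z : res S.subtype X ⟶ res S.subtype Y) (q : G ⧸ S) : X →ₗ[k] Y :=
  q.liftOn' (fun g ↦ Y.ρ g ∘ₗ z.hom.toLinearMap ∘ₗ X.ρ g⁻¹) <| by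
    intro g h hgh
    obtain ⟨s, rfl⟩ : ∃ s : S, h = g * s :=
      ⟨⟨g⁻¹ * h, QuotientGroup.leftRel_apply.mp hgh⟩, by simp⟩
    ext v
    have hz : z.hom (X.ρ (s : G)⁻¹ (X.ρ g⁻¹ v)) = Y.ρ (s : G)⁻¹ (z.hom (X.ρ g⁻¹ v)) :=
      LinearMap.congr_fun (z.hom.2 s⁻¹) (X.ρ g⁻¹ v)
    simp [hz]

theorem cosetConj_mk_apply (z : res S.subtype X ⟶ res S.subtype Y) (g : G) (v : X) :
    cosetConj z g v = Y.ρ g (z.hom (X.ρ g⁻¹ v)) :=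
  rfl

theorem cosetConj_smul_apply (z : res S.subtype X ⟶ res S.subtype Y) (g : G) (q : G ⧸ S) (v : X) :
    cosetConj z (g • q) (X.ρ g v) = Y.ρ g (cosetConj z q v) := by
  induction q using QuotientGroup.induction_on with
  | H h =>
    rw [MulAction.Quotient.smul_coe]
    simp [cosetConj_mk_apply]

theorem cosetConj_resMap_comp_apply (i : X ⟶ X') (z : res S.subtype X' ⟶ res S.subtype Y)
    (q : G ⧸ S) (v : X) :
    cosetConj (resMap S.subtype i ≫ z) q v = cosetConj z q (i.hom v) := by
  induction q using QuotientGroup.induction_on with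
  | H g => simp [cosetConj_mk_apply, hom_comm_apply]

theorem cosetConj_resMap_apply (f : X ⟶ Y) (q : G ⧸ S) (v : X) :
    cosetConj (resMap S.subtype f) q v = f.hom v := by
  induction q using QuotientGroup.induction_on with
  | H g => simp [cosetConj_mk_apply, hom_comm_apply]

variable [Fintype (G ⧸ S)]

/-- The transfer of an `S`-equivariant map: the `G`-equivariant sum of its conjugates over the
cosets of `S`. -/
def transferHom (z : res S.subtype X ⟶ res S.subtype Y) : X ⟶ Y :=
  ofHom ⟨∑ q : G ⧸ S, cosetConj z q, fun g ↦ by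
    ext v
    simp only [LinearMap.comp_apply, LinearMap.sum_apply, map_sum, ← cosetConj_smul_apply]
    exact (Equiv.sum_comp (MulAction.toPerm g) fun q ↦ cosetConj z q (X.ρ g v)).symm⟩

theorem transferHom_apply (z : res S.subtype X ⟶ res S.subtype Y) (v : X) :
    (transferHom z).hom v = ∑ q : G ⧸ S, cosetConj z q v :=
  LinearMap.sum_apply _ _ _

theorem comp_transferHom (i : X ⟶ X') (z : res S.subtype X' ⟶ res S.subtype Y) :
    i ≫ transferHom z = transferHom (resMap S.subtype i ≫ z) := by
  ext v
  simp [transferHom_apply, cosetConj_resMap_comp_apply]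

theorem transferHom_resMap (f : X ⟶ Y) : transferHom (resMap S.subtype f) = S.index • f := by
  ext v
  simp [transferHom_apply, cosetConj_resMap_apply, nsmul_hom, S.index_eq_card]

theorem comp_transferHom_eq_index_nsmul {i : X ⟶ X'} {f : X ⟶ Y}
    {z : res S.subtype X' ⟶ res S.subtype Y} (h : resMap S.subtype i ≫ z = resMap S.subtype f) :
    i ≫ transferHom z = S.index • f := by
  rw [comp_transferHom, h, transferHom_resMap]

end Transfer

section Restriction

variable {k G H K : Type u} [CommRing k] [Group G] [Group H] [Group K]

instance : HasExt.{u} (Rep.{u} k G) := hasExt_of_enoughProjectives _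

theorem extClass_comp_index_nsmul_mk₀ {S : Subgroup G} [S.FiniteIndex]
    {T : ShortComplex (Rep.{u} k G)} (hT : T.ShortExact) {Y : Rep.{u} k G} {f : T.X₁ ⟶ Y}
    {z : res S.subtype T.X₂ ⟶ res S.subtype Y}
    (h : resMap S.subtype T.f ≫ z = resMap S.subtype f) :
    hT.extClass.comp (S.index • Ext.mk₀ f) (add_zero 1) = 0 := by
  let _ : Fintype (G ⧸ S) := S.fintypeQuotientOfFiniteIndex
  have hfactor : S.index • Ext.mk₀ f =
      (Ext.mk₀ T.f).comp (Ext.mk₀ (transferHom z)) (zero_add 0) := by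
    rw [Ext.mk₀_comp_mk₀, comp_transferHom_eq_index_nsmul h]
    exact (map_nsmul Ext.addEquiv₀.symm S.index f).symm
  rw [hfactor, hT.extClass_comp_assoc]

theorem index_nsmul_eq_zero_of_mapExactFunctor_res_eq_zero (S : Subgroup G) [S.FiniteIndex]
    {X Y : Rep.{u} k G} {n : ℕ} (x : Ext X Y n)
    (hx : x.mapExactFunctor (resFunctor S.subtype) = 0) : S.index • x = 0 := by
  induction x using ext_induction_of_enoughProjectives with
  | mk₀ f =>
    rw [Ext.mapExactFunctor_mk₀, Ext.mk₀_eq_zero_iff] at hx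
    rw [(Functor.map_eq_zero_iff _).mp hx, Ext.mk₀_zero, smul_zero]
  | @extClass_comp T hT _ n y ih =>
    rw [Ext.mapExactFunctor_comp, Ext.mapExactFunctor_extClass] at hx
    obtain ⟨z, hz⟩ := Ext.contravariant_sequence_exact₁ (hT.map_of_exact _) _ _ _ hx
    suffices hT.extClass.comp (S.index • y) (add_comm 1 n) = 0 from
      (map_nsmul (Ext.bilinearComp _ _ _ 1 n _ (add_comm 1 n) hT.extClass) S.index y).symm.trans
        this
    cases n with
    | zero =>
      obtain ⟨f, rfl⟩ := (Ext.mk₀_bijective _ _).2 y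
      obtain ⟨g, rfl⟩ := (Ext.mk₀_bijective _ _).2 z
      rw [Ext.mapExactFunctor_mk₀, Ext.mk₀_comp_mk₀] at hz
      exact extClass_comp_index_nsmul_mk₀ hT (z := g) ((Ext.mk₀_bijective _ _).1 hz)
    | succ n =>
      have : Projective (T.map (resFunctor S.subtype)).X₂ :=
        Functor.projective_obj_of_projective (resFunctor S.subtype) (X := T.X₂) inferInstance
      have hy : y.mapExactFunctor (resFunctor S.subtype) = 0 := by
        rw [z.eq_zero_of_projective, Ext.comp_zero] at hz
        exact hz.symm
      rw [ih hy, Ext.comp_zero]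

variable {V W : Type u} [AddCommGroup V] [Module k V] [AddCommGroup W] [Module k W]

/-- The restriction map along `f` on `Ext` groups between trivial representations. Restricting a
trivial representation gives a trivial one definitionally, so no comparison isomorphism is
needed. -/
noncomputable def extRestrict (f : H →* G) (n : ℕ) :
    Ext (trivial k G V) (trivial k G W) n →+ Ext (trivial k H V) (trivial k H W) n :=
  (resFunctor f).mapExtAddHom _ _ n

theorem extRestrict_id {n : ℕ} (x : Ext (trivial k G V) (trivial k G W) n) :
    extRestrict (MonoidHom.id G) n x = x :=
  mapExactFunctor_id x

theorem extRestrict_comp (f : H →* G) (g : K →* H) {n : ℕ}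
    (x : Ext (trivial k G V) (trivial k G W) n) :
    extRestrict (f.comp g) n x = extRestrict g n (extRestrict f n x) :=
  mapExactFunctor_comp_functor (resFunctor f) (resFunctor g) x

theorem extRestrict_one {n : ℕ} (x : Ext (trivial k G k) (trivial k G W) (n + 1)) :
    extRestrict (1 : H →* G) (n + 1) x = 0 := by
  have hfactor : (1 : H →* G) = (1 : PUnit.{u + 1} →* G).comp 1 := rfl
  have hzero : extRestrict (1 : PUnit.{u + 1} →* G) (n + 1) x = 0 := Ext.eq_zero_of_projective _
  rw [hfactor, extRestrict_comp, hzero, map_zero]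

theorem index_nsmul_extRestrict_eq (S : Subgroup G) [S.FiniteIndex] {e : G →* G}
    (he : e.comp S.subtype = S.subtype) {n : ℕ} (x : Ext (trivial k G V) (trivial k G W) n) :
    S.index • extRestrict e n x = S.index • x := by
  have hres : extRestrict S.subtype n (extRestrict e n x - x) = 0 := by
    rw [map_sub, ← extRestrict_comp, he, sub_self]
  rw [← sub_eq_zero, ← smul_sub]
  exact index_nsmul_eq_zero_of_mapExactFunctor_res_eq_zero S _ hres

end Restriction

section PiTruncation

variable {ι : Type v} {M : ι → Type w} [∀ i, Group (M i)]

theorem index_ker_evalMonoidHom (a : ι) : (Pi.evalMonoidHom M a).ker.index = Nat.card (M a) := by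
  classical
  rw [Subgroup.index_ker, MonoidHom.range_eq_top.mpr (Function.surjective_eval a),
    Subgroup.card_top]

variable [DecidableEq ι]

/-- The endomorphism of a product of groups that keeps the coordinates in `s` and replaces all
others by `1`. -/
def piTruncation (s : Finset ι) : (∀ i, M i) →* ∀ i, M i where
  toFun g := s.piecewise g 1
  map_one' := s.piecewise_same (1 : ∀ i, M i)
  map_mul' g h := by
    ext i
    by_cases hi : i ∈ s <;> simp [hi]

theorem piTruncation_empty : piTruncation (M := M) ∅ = 1 :=
  MonoidHom.ext fun g ↦ Finset.piecewise_empty g 1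

theorem piTruncation_univ [Fintype ι] : piTruncation (M := M) Finset.univ = MonoidHom.id _ :=
  MonoidHom.ext fun g ↦ Finset.piecewise_univ g 1

theorem piTruncation_comp (s t : Finset ι) :
    (piTruncation (M := M) s).comp (piTruncation t) = piTruncation (s ∩ t) := by
  ext g i
  by_cases hs : i ∈ s <;> by_cases ht : i ∈ t <;> simp [piTruncation, hs, ht]

theorem piTruncation_compl_singleton_comp_subtype_ker [Fintype ι] (a : ι) :
    (piTruncation {a}ᶜ).comp (Pi.evalMonoidHom M a).ker.subtype =
      (Pi.evalMonoidHom M a).ker.subtype := by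
  ext g i
  by_cases hi : i = a
  · subst hi
    simpa [piTruncation] using (MonoidHom.mem_ker.mp g.2).symm
  · simp [piTruncation, hi]

end PiTruncation

section Product

variable {k ι : Type u} [CommRing k] {M : ι → Type u} [∀ i, Group (M i)]
  {V W : Type u} [AddCommGroup V] [Module k V] [AddCommGroup W] [Module k W]

theorem nsmul_extRestrict_piTruncation_insert [Finite ι] [DecidableEq ι] {a : ι} [Finite (M a)]
    {N : ℕ} (hN : Nat.card (M a) ∣ N) {s : Finset ι} (ha : a ∉ s) {n : ℕ}
    (x : Ext (trivial k (∀ i, M i) V) (trivial k (∀ i, M i) W) n) :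
    N • extRestrict (piTruncation (insert a s)) n x = N • extRestrict (piTruncation s) n x := by
  obtain ⟨m, rfl⟩ := hN
  have := Fintype.ofFinite ι
  have : (Pi.evalMonoidHom M a).ker.FiniteIndex :=
    ⟨by rw [index_ker_evalMonoidHom]; exact Nat.card_pos.ne'⟩
  have hs : insert a s ∩ {a}ᶜ = s := by
    rw [← Finset.sdiff_eq_inter_compl, Finset.sdiff_singleton_eq_erase, Finset.erase_insert ha]
  have hcomp : extRestrict (piTruncation s) n x =
      extRestrict (piTruncation {a}ᶜ) n (extRestrict (piTruncation (insert a s)) n x) := by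
    rw [← extRestrict_comp, piTruncation_comp, hs]
  rw [hcomp, mul_comm, mul_smul, mul_smul, ← index_ker_evalMonoidHom,
    index_nsmul_extRestrict_eq _ (piTruncation_compl_singleton_comp_subtype_ker a)]

variable [Finite ι] [∀ i, Finite (M i)] {N : ℕ}

theorem nsmul_ext_trivial_pi_eq_zero (hN : ∀ i, Nat.card (M i) ∣ N) {n : ℕ}
    (x : Ext (trivial k (∀ i, M i) k) (trivial k (∀ i, M i) W) (n + 1)) : N • x = 0 := by
  classical
  have := Fintype.ofFinite ι
  have htruncation (s : Finset ι) : N • extRestrict (piTruncation s) (n + 1) x = 0 := by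
    induction s using Finset.induction_on with
    | empty => rw [piTruncation_empty, extRestrict_one, smul_zero]
    | insert a s ha ih => rw [nsmul_extRestrict_piTruncation_insert (hN a) ha, ih]
  simpa only [piTruncation_univ, extRestrict_id] using htruncation Finset.univ

theorem nsmul_ext_trivial_eq_zero_of_mulEquiv_pi {G : Type u} [Group G] (e : G ≃* ∀ i, M i)
    (hN : ∀ i, Nat.card (M i) ∣ N) {n : ℕ} (x : Ext (trivial k G k) (trivial k G W) (n + 1)) :
    N • x = 0 := by
  have hx : extRestrict (e : G →* ∀ i, M i) (n + 1)
      (extRestrict (e.symm : (∀ i, M i) →* G) (n + 1) x) = x := by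
    rw [← extRestrict_comp, e.coe_monoidHom_symm_comp_coe_monoidHom, extRestrict_id]
  rw [← hx, ← map_nsmul, nsmul_ext_trivial_pi_eq_zero hN, map_zero]

end Product

section GroupCohomology

variable {C : Type u} [Category.{v} C] [Abelian C] [HasExt.{w} C] {X Y : C}

theorem nsmul_extMk (P : ProjectiveResolution X) {n : ℕ} (f : P.complex.X n ⟶ Y)
    (hf : P.complex.d (n + 1) n ≫ f = 0) (N : ℕ) :
    N • P.extMk f (n + 1) rfl hf = P.extMk (N • f) (n + 1) rfl (by simp [hf]) := by
  induction N with
  | zero => simp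
  | succ N ih => simp only [succ_nsmul, ih, P.add_extMk]

theorem nsmul_homology_linearYonedaObj_eq_zero {R : Type u'} [Ring R] [Linear R C]
    (P : ProjectiveResolution X) {N n : ℕ} (hN : ∀ x : Ext X Y (n + 1), N • x = 0)
    (c : (P.complex.linearYonedaObj R Y).homology (n + 1)) : N • c = 0 := by
  let L := P.complex.linearYonedaObj R Y
  obtain ⟨z, rfl⟩ := (ModuleCat.epi_iff_surjective (L.homologyπ (n + 1))).mp inferInstance c
  let f : P.complex.X (n + 1) ⟶ Y := L.iCycles (n + 1) z
  have hf : P.complex.d (n + 2) (n + 1) ≫ f = 0 :=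
    ConcreteCategory.congr_hom (L.iCycles_d (n + 1) (n + 2)) z
  have hmk : P.extMk (N • f) (n + 2) rfl (by simp [hf]) = 0 := by rw [← nsmul_extMk P f hf, hN]
  obtain ⟨g, hg⟩ := (P.extMk_eq_zero_iff _ _ rfl _ n rfl).mp hmk
  have hz : L.toCycles n (n + 1) g = N • z := by
    apply (ModuleCat.mono_iff_injective (L.iCycles (n + 1))).mp inferInstance
    rw [map_nsmul]
    exact (ConcreteCategory.congr_hom (L.toCycles_i n (n + 1)) g).trans hg
  calc
    N • L.homologyπ (n + 1) z = L.homologyπ (n + 1) (L.toCycles n (n + 1) g) := by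
      rw [hz, map_nsmul]
    _ = 0 := ConcreteCategory.congr_hom (L.toCycles_comp_homologyπ n (n + 1)) g

theorem nsmul_groupCohomology_eq_zero_of_ext {k G : Type u} [CommRing k] [Group G]
    {A : Rep.{u} k G} {N n : ℕ} (hN : ∀ x : Ext (trivial k G k) A (n + 1), N • x = 0)
    (x : groupCohomology A (n + 1)) : N • x = 0 := by
  let e := (groupCohomologyIso A (n + 1) (barResolution k G)).toLinearEquiv
  rw [← e.map_eq_zero_iff, map_nsmul]
  exact nsmul_homology_linearYonedaObj_eq_zero _ hN _

end GroupCohomology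

theorem statement9_general {k ι : Type u} [CommRing k] [Finite ι] {M : ι → Type u}
    [∀ i, Group (M i)] [∀ i, Finite (M i)] {G : Type u} [Group G] (e : G ≃* ∀ i, M i)
    {W : Type u} [AddCommGroup W] [Module k W] {N : ℕ} (hN : ∀ i, Nat.card (M i) ∣ N)
    {n : ℕ} (hn : 1 ≤ n) (x : groupCohomology (Rep.trivial k G W) n) : N • x = 0 := by
  obtain ⟨m, rfl⟩ := Nat.exists_eq_add_of_le' hn
  exact nsmul_groupCohomology_eq_zero_of_ext (nsmul_ext_trivial_eq_zero_of_mulEquiv_pi e hN) x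

/-- For a prime `p`, `n ≥ 1`, and the elementary abelian group
`G = (ℤ/p)^n` (written multiplicatively), the group cohomology `H^k(G; ℤ)` with
trivial coefficients is annihilated by `p` in every positive degree `k ≥ 1`:
`p • x = 0` for every class `x`.  In particular multiplication by `p` on the
coefficients induces the zero map on `H^k(BG; ℤ)` for `k ≥ 1`. -/
theorem statement9 (p n : ℕ) (hp : p.Prime) (hn : 1 ≤ n) (k : ℕ) (hk : 1 ≤ k)
    (x : groupCohomology
      (Rep.trivial ℤ (Multiplicative (Fin n → ZMod p)) ℤ) k) :
    p • x = 0 := by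
  have : NeZero p := ⟨hp.ne_zero⟩
  exact statement9_general (MulEquiv.piMultiplicative fun _ : Fin n ↦ ZMod p) (by simp) hk x
end
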